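/- There exist two continuous functions f, g : [0,1] → ℝ such that: all sublevel sets [f ≤ α] and [g ≤ α] are compact; |∇f|(t) = |∇g|(t) for every t ∈ [0,1], with |∇f|(t) ∈ {1, +∞} for all t ∈ (0,1] and |∇f|(0) = |∇g|(0) = 0; Crit(f) = Crit(g) = {0}; f(0) = g(0) = 0; and yet there is no constant c ∈ ℝ such that f(t) = g(t) + c for all t ∈ [0,1]. (Such functions are f(t) = 𝔠(t) + t and g(t) = 2𝔠(t) + t, where 𝔠 : [0,1] → [0,1] is the Cantor staircase function.) -/

import Mathlib

open Filter Topology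
open scoped ENNReal Classical

/-- The metric slope of `f : M → ℝ` at `x`: it is `0` if `x` is an isolated point of `M`,
and otherwise `limsup_{y → x, y ≠ x} (f x - f y)⁺ / d(x,y)`, with values in `[0, +∞]`. -/
noncomputable def metricSlope {M : Type*} [MetricSpace M] (f : M → ℝ) (x : M) : ℝ≥0∞ :=
  if 𝓝[≠] x = ⊥ then 0
  else Filter.limsup (fun y => ENNReal.ofReal (max (f x - f y) 0 / dist x y)) (𝓝[≠] x)

/-!
For a monotone function only the points to the left contribute to the slope, which is therefore
the limsup of the left difference quotients. At each point the Cantor staircase `c` is either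
constant on a left neighbourhood or, by self-similarity, has for every `n` a left difference
quotient of at least `(3/2) ^ n / 2` at scale `(1/3) ^ n`. So for every `k > 0` the slope of `k * c + id` on `(0, 1]` is
`1` in the first case and `∞` in the second, and it does not depend on `k`.
-/

section MetricSlope

variable {M : Type*}

lemma metricSlope_eq_limsup [MetricSpace M] (f : M → ℝ) (x : M) :
    metricSlope f x =
      limsup (fun y => ENNReal.ofReal (max (f x - f y) 0 / dist x y)) (𝓝[≠] x) := by
  unfold metricSlope
  split_ifs with h
  · rw [h, limsup_bot, bot_eq_zero]
  · rfl

lemma map_val_nhdsNE [TopologicalSpace M] {s : Set M} (x : s) :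
    map ((↑) : s → M) (𝓝[≠] x) = 𝓝[s \ {↑x}] (x : M) := by
  rw [Topology.IsEmbedding.subtypeVal.map_nhdsWithin_eq,
    Set.image_compl_eq_range_sdiff_image Subtype.val_injective, Subtype.range_coe,
    Set.image_singleton]

lemma metricSlope_domRestrict [MetricSpace M] {s : Set M} (f : M → ℝ) (x : s) :
    metricSlope (s.domRestrict f) x =
      limsup (fun y => ENNReal.ofReal (max (f x - f y) 0 / dist (x : M) y))
        (𝓝[s \ {↑x}] (x : M)) := by
  rw [metricSlope_eq_limsup, ← map_val_nhdsNE]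
  rfl

lemma metricSlope_domRestrict_of_monotoneOn {s : Set ℝ} {f : ℝ → ℝ} (hf : MonotoneOn f s) (t : s) :
    metricSlope (s.domRestrict f) t =
      limsup (fun y => ENNReal.ofReal (slope f t y)) (𝓝[s ∩ Set.Iio ↑t] (t : ℝ)) := by
  have right : limsup (fun y => ENNReal.ofReal (max (f t - f y) 0 / dist (t : ℝ) y))
      (𝓝[s ∩ Set.Ioi ↑t] (t : ℝ)) = ⊥ := by
    refine (limsup_congr ?_).trans limsup_const_bot
    filter_upwards [self_mem_nhdsWithin] with y hy
    rw [max_eq_right (sub_nonpos.2 (hf t.2 hy.1 hy.2.le)), zero_div, ENNReal.ofReal_zero,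
      bot_eq_zero]
  rw [metricSlope_domRestrict, Set.sdiff_eq, ← Set.Iio_union_Ioi, Set.inter_union_distrib_left,
    nhdsWithin_union, limsup_sup_filter, right, sup_bot_eq]
  refine limsup_congr ?_
  filter_upwards [self_mem_nhdsWithin] with y hy
  rw [max_eq_left (sub_nonneg.2 (hf hy.1 t.2 hy.2.le)), Real.dist_eq,
    abs_of_pos (sub_pos.2 hy.2), slope_comm, slope_def_field]

end MetricSlope

section CantorStaircase

/-- Piecewise affine approximations of the Cantor staircase, extended by `0` to the left and by `1`
to the right of `[0, 1]`, so that the self-similarity recursion holds on all of `ℝ`. -/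
noncomputable def cantorApprox : ℕ → ℝ → ℝ
  | 0, x => max 0 (min x 1)
  | n + 1, x => (cantorApprox n (3 * x) + cantorApprox n (3 * x - 2)) / 2

lemma cantorApprox_of_nonpos (n : ℕ) {x : ℝ} (hx : x ≤ 0) : cantorApprox n x = 0 := by
  induction n generalizing x with
  | zero => exact max_eq_left ((min_le_left x 1).trans hx)
  | succ n ih => rw [cantorApprox, ih (by linarith), ih (by linarith), add_zero, zero_div]

lemma cantorApprox_of_one_le (n : ℕ) {x : ℝ} (hx : 1 ≤ x) : cantorApprox n x = 1 := by
  induction n generalizing x with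
  | zero => rw [cantorApprox, min_eq_right hx, max_eq_right zero_le_one]
  | succ n ih => rw [cantorApprox, ih (by linarith), ih (by linarith), add_self_div_two]

lemma monotone_cantorApprox (n : ℕ) : Monotone (cantorApprox n) := by
  induction n with
  | zero => exact monotone_const.max (monotone_id.min monotone_const)
  | succ n ih =>
    intro x y hxy
    rw [cantorApprox, cantorApprox]
    gcongr <;> exact ih (by linarith)

lemma continuous_cantorApprox (n : ℕ) : Continuous (cantorApprox n) := by
  induction n with
  | zero => exact continuous_const.max (continuous_id.min continuous_const)
  | succ n ih =>
    change Continuous fun x => (cantorApprox n (3 * x) + cantorApprox n (3 * x - 2)) / 2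
    fun_prop

lemma cantorApprox_mem_Icc (n : ℕ) (x : ℝ) : cantorApprox n x ∈ Set.Icc (0 : ℝ) 1 := by
  constructor
  · rw [← cantorApprox_of_nonpos n (min_le_right x 0)]
    exact monotone_cantorApprox n (min_le_left x 0)
  · rw [← cantorApprox_of_one_le n (le_max_right x 1)]
    exact monotone_cantorApprox n (le_max_left x 1)

lemma half_le_cantorApprox (n : ℕ) {x : ℝ} (hx : x ≤ 1) : x / 2 ≤ cantorApprox n x := by
  have nonneg (m : ℕ) (y : ℝ) : 0 ≤ cantorApprox m y := (cantorApprox_mem_Icc m y).1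
  induction n generalizing x with
  | zero =>
    have := nonneg 0 x
    have : x ≤ cantorApprox 0 x := by rw [cantorApprox, min_eq_left hx]; exact le_max_right 0 x
    linarith
  | succ n ih =>
    have right := nonneg n (3 * x - 2)
    rw [cantorApprox]
    rcases le_total (3 * x) 1 with h | h
    · linarith [ih h, nonneg n (3 * x)]
    · linarith [cantorApprox_of_one_le n h]

/-- On each half-line `x ≤ 1/2`, `1/2 ≤ x` one of the two terms of the recursion is constant,
which makes the recursion a contraction with factor `1/2`. -/
lemma dist_cantorApprox_succ_le (n : ℕ) (x : ℝ) :
    dist (cantorApprox n x) (cantorApprox (n + 1) x) ≤ 1 * (1 / 2) ^ n := by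
  induction n generalizing x with
  | zero =>
    simpa using Real.dist_le_of_mem_Icc_01 (cantorApprox_mem_Icc 0 x) (cantorApprox_mem_Icc 1 x)
  | succ n ih =>
    have dist_half (u v : ℝ) : dist (u / 2) (v / 2) = dist u v / 2 := by
      rw [Real.dist_eq, Real.dist_eq, ← sub_div, abs_div, abs_two]
    rw [cantorApprox, cantorApprox, dist_half, pow_succ]
    rcases le_total x (1 / 2) with hx | hx
    · have h : 3 * x - 2 ≤ 0 := by linarith
      rw [cantorApprox_of_nonpos n h, cantorApprox_of_nonpos (n + 1) h, dist_add_right]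
      linarith [ih (3 * x)]
    · have h : 1 ≤ 3 * x := by linarith
      rw [cantorApprox_of_one_le n h, cantorApprox_of_one_le (n + 1) h, dist_add_left]
      linarith [ih (3 * x - 2)]

/-- The Cantor staircase, extended by `0` to the left and by `1` to the right of `[0, 1]`. -/
noncomputable def cantorStaircase (x : ℝ) : ℝ :=
  limUnder atTop fun n => cantorApprox n x

lemma tendsto_cantorApprox (x : ℝ) :
    Tendsto (fun n => cantorApprox n x) atTop (𝓝 (cantorStaircase x)) :=
  (cauchySeq_of_le_geometric (1 / 2) 1 one_half_lt_one
    (dist_cantorApprox_succ_le · x)).tendsto_limUnder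

lemma tendstoUniformly_cantorApprox : TendstoUniformly cantorApprox cantorStaircase atTop := by
  have bound (n : ℕ) (x : ℝ) :
      dist (cantorApprox n x) (cantorStaircase x) ≤ 1 * (1 / 2) ^ n / (1 - 1 / 2) :=
    dist_le_of_le_geometric_of_tendsto (1 / 2) 1 one_half_lt_one
      (dist_cantorApprox_succ_le · x) (tendsto_cantorApprox x) n
  have bound_tendsto : Tendsto (fun n : ℕ => 1 * (1 / 2 : ℝ) ^ n / (1 - 1 / 2)) atTop (𝓝 0) := by
    simpa using ((tendsto_pow_atTop_nhds_zero_of_lt_one one_half_pos.le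
      one_half_lt_one).const_mul (1 : ℝ)).div_const (1 - 1 / 2 : ℝ)
  rw [Metric.tendstoUniformly_iff]
  intro ε hε
  filter_upwards [bound_tendsto.eventually_lt_const hε] with n hn x
  rw [dist_comm]
  exact (bound n x).trans_lt hn

lemma continuous_cantorStaircase : Continuous cantorStaircase :=
  tendstoUniformly_cantorApprox.continuous (Frequently.of_forall continuous_cantorApprox)

lemma monotone_cantorStaircase : Monotone cantorStaircase := fun x y hxy =>
  le_of_tendsto_of_tendsto' (tendsto_cantorApprox x) (tendsto_cantorApprox y)
    fun n => monotone_cantorApprox n hxy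

lemma cantorStaircase_of_nonpos {x : ℝ} (hx : x ≤ 0) : cantorStaircase x = 0 :=
  tendsto_nhds_unique (tendsto_cantorApprox x)
    (tendsto_const_nhds.congr fun n => (cantorApprox_of_nonpos n hx).symm)

lemma cantorStaircase_of_one_le {x : ℝ} (hx : 1 ≤ x) : cantorStaircase x = 1 :=
  tendsto_nhds_unique (tendsto_cantorApprox x)
    (tendsto_const_nhds.congr fun n => (cantorApprox_of_one_le n hx).symm)

lemma cantorStaircase_eq (x : ℝ) :
    cantorStaircase x = (cantorStaircase (3 * x) + cantorStaircase (3 * x - 2)) / 2 :=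
  tendsto_nhds_unique ((tendsto_add_atTop_iff_nat 1).2 (tendsto_cantorApprox x))
    (((tendsto_cantorApprox (3 * x)).add (tendsto_cantorApprox (3 * x - 2))).div_const 2)

lemma half_le_cantorStaircase {x : ℝ} (hx : x ≤ 1) : x / 2 ≤ cantorStaircase x :=
  ge_of_tendsto' (tendsto_cantorApprox x) fun n => half_le_cantorApprox n hx

end CantorStaircase

section LeftSlope

lemma slope_const_mul_add_id {𝕜 : Type*} [Field 𝕜] (k : 𝕜) (f : 𝕜 → 𝕜) {t y : 𝕜} (hyt : y ≠ t) :
    slope (fun x => k * f x + x) t y = k * slope f t y + 1 := by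
  have : y - t ≠ 0 := sub_ne_zero.2 hyt
  rw [slope_def_field, slope_def_field]
  field_simp
  ring

lemma tendsto_nhdsLT_of_strictMono {α β : Type*} [TopologicalSpace α] [Preorder α]
    [TopologicalSpace β] [Preorder β] {f : α → β} (hf : StrictMono f) {t : α}
    (hcont : ContinuousAt f t) : Tendsto f (𝓝[<] t) (𝓝[<] f t) :=
  hcont.continuousWithinAt.tendsto_nhdsWithin fun _ hy => hf hy

lemma eventually_nhdsLT_cantorStaircase_eq {t : ℝ}
    (h₀ : ∀ᶠ y in 𝓝[<] (3 * t), cantorStaircase y = cantorStaircase (3 * t))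
    (h₂ : ∀ᶠ y in 𝓝[<] (3 * t - 2), cantorStaircase y = cantorStaircase (3 * t - 2)) :
    ∀ᶠ y in 𝓝[<] t, cantorStaircase y = cantorStaircase t := by
  have tendsto₀ : Tendsto (fun y => 3 * y) (𝓝[<] t) (𝓝[<] (3 * t)) :=
    tendsto_nhdsLT_of_strictMono (fun x y _ => by linarith) (by fun_prop)
  have tendsto₂ : Tendsto (fun y => 3 * y - 2) (𝓝[<] t) (𝓝[<] (3 * t - 2)) :=
    tendsto_nhdsLT_of_strictMono (fun x y _ => by linarith) (by fun_prop)
  filter_upwards [tendsto₀.eventually h₀, tendsto₂.eventually h₂] with y hy₀ hy₂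
  rw [cantorStaircase_eq y, cantorStaircase_eq t, hy₀, hy₂]

lemma le_slope_cantorStaircase {t y a : ℝ} (hyt : y < t) (ha : a = 0 ∨ a = 2) :
    3 / 2 * slope cantorStaircase (3 * t - a) (3 * y - a) ≤ slope cantorStaircase t y := by
  have h₀ : cantorStaircase (3 * y) ≤ cantorStaircase (3 * t) :=
    monotone_cantorStaircase (by linarith)
  have h₂ : cantorStaircase (3 * y - 2) ≤ cantorStaircase (3 * t - 2) :=
    monotone_cantorStaircase (by linarith)
  have increment : (cantorStaircase (3 * t - a) - cantorStaircase (3 * y - a)) / 2 ≤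
      cantorStaircase t - cantorStaircase y := by
    rw [cantorStaircase_eq t, cantorStaircase_eq y]
    rcases ha with rfl | rfl
    · rw [sub_zero, sub_zero]
      linarith
    · linarith
  have hpos : 0 < t - y := sub_pos.2 hyt
  rw [slope_comm, slope_comm _ t, slope_def_field, slope_def_field]
  calc 3 / 2 * ((cantorStaircase (3 * t - a) - cantorStaircase (3 * y - a)) /
          (3 * t - a - (3 * y - a)))
      = (cantorStaircase (3 * t - a) - cantorStaircase (3 * y - a)) / 2 / (t - y) := by
        rw [show 3 * t - a - (3 * y - a) = 3 * (t - y) by ring]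
        field_simp
    _ ≤ _ := by gcongr

lemma mem_Ioc_of_not_eventually_cantorStaircase_eq {t : ℝ}
    (ht : ¬ ∀ᶠ y in 𝓝[<] t, cantorStaircase y = cantorStaircase t) : t ∈ Set.Ioc (0 : ℝ) 1 := by
  constructor
  · contrapose! ht
    filter_upwards [self_mem_nhdsWithin] with y hy
    rw [cantorStaircase_of_nonpos ht, cantorStaircase_of_nonpos (hy.le.trans ht)]
  · contrapose! ht
    filter_upwards [mem_nhdsWithin_of_mem_nhds (Ioi_mem_nhds ht)] with y hy
    rw [cantorStaircase_of_one_le ht.le, cantorStaircase_of_one_le (Set.mem_Ioi.1 hy).le]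

lemma exists_le_slope_cantorStaircase {t : ℝ}
    (ht : ¬ ∀ᶠ y in 𝓝[<] t, cantorStaircase y = cantorStaircase t) (n : ℕ) :
    ∃ y < t, t - (1 / 3) ^ n ≤ y ∧ 1 / 2 * (3 / 2) ^ n ≤ slope cantorStaircase t y := by
  induction n generalizing t with
  | zero =>
    obtain ⟨ht₀, ht₁⟩ := mem_Ioc_of_not_eventually_cantorStaircase_eq ht
    refine ⟨0, ht₀, by simpa using ht₁, ?_⟩
    rw [slope_comm, slope_def_field, cantorStaircase_of_nonpos le_rfl, le_div_iff₀ (by simpa)]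
    linarith [half_le_cantorStaircase ht₁]
  | succ n ih =>
    obtain ⟨a, ha, hta⟩ : ∃ a : ℝ, (a = 0 ∨ a = 2) ∧
        ¬ ∀ᶠ y in 𝓝[<] (3 * t - a), cantorStaircase y = cantorStaircase (3 * t - a) := by
      contrapose! ht
      refine eventually_nhdsLT_cantorStaircase_eq ?_ (ht 2 (Or.inr rfl))
      simpa only [sub_zero] using ht 0 (Or.inl rfl)
    obtain ⟨z, hzt, hz, hslope⟩ := ih hta
    obtain ⟨y, rfl⟩ : ∃ y, 3 * y - a = z := ⟨(z + a) / 3, by ring⟩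
    have hyt : y < t := by linarith
    refine ⟨y, hyt, by rw [pow_succ]; linarith, ?_⟩
    calc 1 / 2 * (3 / 2) ^ (n + 1) = 3 / 2 * (1 / 2 * (3 / 2) ^ n) := by ring
      _ ≤ 3 / 2 * slope cantorStaircase (3 * t - a) (3 * y - a) := by gcongr
      _ ≤ slope cantorStaircase t y := le_slope_cantorStaircase hyt ha

lemma limsup_slope_cantorStaircase_eq_top {t : ℝ}
    (ht : ¬ ∀ᶠ y in 𝓝[<] t, cantorStaircase y = cantorStaircase t) :
    limsup (fun y => ENNReal.ofReal (slope cantorStaircase t y)) (𝓝[<] t) = ⊤ := by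
  choose y hyt hy hslope using exists_le_slope_cantorStaircase ht
  have lower : Tendsto (fun n : ℕ => t - (1 / 3 : ℝ) ^ n) atTop (𝓝 t) := by
    simpa using (tendsto_pow_atTop_nhds_zero_of_lt_one (r := (1 / 3 : ℝ))
      (by norm_num) (by norm_num)).const_sub t
  have y_tendsto : Tendsto y atTop (𝓝[<] t) := tendsto_nhdsWithin_iff.2
    ⟨tendsto_of_tendsto_of_tendsto_of_le_of_le lower tendsto_const_nhds hy fun n => (hyt n).le,
      .of_forall hyt⟩
  have slope_tendsto : Tendsto (fun n => slope cantorStaircase t (y n)) atTop atTop :=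
    tendsto_atTop_mono hslope
      ((tendsto_pow_atTop_atTop_of_one_lt (by norm_num)).const_mul_atTop one_half_pos)
  refine top_le_iff.1 ?_
  calc ⊤ = limsup (fun n => ENNReal.ofReal (slope cantorStaircase t (y n))) atTop :=
        (ENNReal.tendsto_ofReal_atTop.comp slope_tendsto).limsup_eq.symm
    _ ≤ limsup (fun z => ENNReal.ofReal (slope cantorStaircase t z)) (𝓝[<] t) :=
      y_tendsto.limsup_comp_le_limsup (u := fun z => ENNReal.ofReal (slope cantorStaircase t z))

end LeftSlope

section TiltedStaircase

/-- The function `x ↦ k * c x + x` on `[0, 1]`, where `c` is the Cantor staircase; the two functions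
of the counterexample are the cases `k = 1` and `k = 2`. -/
noncomputable def tiltedStaircase (k : ℝ) : Set.Icc (0 : ℝ) 1 → ℝ :=
  (Set.Icc (0 : ℝ) 1).domRestrict fun x => k * cantorStaircase x + x

lemma continuous_tiltedStaircase (k : ℝ) : Continuous (tiltedStaircase k) :=
  ((continuous_cantorStaircase.const_mul k).add continuous_id).continuousOn.domRestrict

lemma isCompact_tiltedStaircase_le (k α : ℝ) : IsCompact {x | tiltedStaircase k x ≤ α} :=
  (isClosed_le (continuous_tiltedStaircase k) continuous_const).isCompact

lemma tiltedStaircase_of_eq_zero (k : ℝ) {t : Set.Icc (0 : ℝ) 1} (ht : (t : ℝ) = 0) :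
    tiltedStaircase k t = 0 := by
  simp [tiltedStaircase, Set.domRestrict_apply, ht, cantorStaircase_of_nonpos]

lemma tiltedStaircase_one (k : ℝ) : tiltedStaircase k 1 = k + 1 := by
  simp [tiltedStaircase, Set.domRestrict_apply, cantorStaircase_of_one_le]

variable {k : ℝ} {t : Set.Icc (0 : ℝ) 1}

lemma metricSlope_tiltedStaircase (hk : 0 ≤ k) (t : Set.Icc (0 : ℝ) 1) :
    metricSlope (tiltedStaircase k) t =
      limsup (fun y => ENNReal.ofReal (k * slope cantorStaircase t y + 1))
        (𝓝[Set.Ico 0 (t : ℝ)] t) := by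
  have mono : Monotone fun x => k * cantorStaircase x + x :=
    (monotone_cantorStaircase.const_mul hk).add monotone_id
  have inter : Set.Icc 0 1 ∩ Set.Iio (t : ℝ) = Set.Ico 0 (t : ℝ) := Set.ext fun y =>
    ⟨fun hy => ⟨hy.1.1, hy.2⟩, fun hy => ⟨⟨hy.1, hy.2.le.trans t.2.2⟩, hy.2⟩⟩
  rw [tiltedStaircase, metricSlope_domRestrict_of_monotoneOn (mono.monotoneOn _), inter]
  refine limsup_congr ?_
  filter_upwards [self_mem_nhdsWithin] with y hy
  rw [slope_const_mul_add_id k _ hy.2.ne]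

lemma metricSlope_tiltedStaircase_of_eq_zero (hk : 0 ≤ k) (ht : (t : ℝ) = 0) :
    metricSlope (tiltedStaircase k) t = 0 := by
  rw [metricSlope_tiltedStaircase hk, ht, Set.Ico_self, nhdsWithin_empty, limsup_bot, bot_eq_zero]

lemma metricSlope_tiltedStaircase_of_ne_zero (hk : 0 ≤ k) (ht : (t : ℝ) ≠ 0) :
    metricSlope (tiltedStaircase k) t =
      limsup (fun y => ENNReal.ofReal (k * slope cantorStaircase t y + 1)) (𝓝[<] (t : ℝ)) := by
  rw [metricSlope_tiltedStaircase hk, nhdsWithin_Ico_eq_nhdsLT (t.2.1.lt_of_ne' ht)]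

lemma metricSlope_tiltedStaircase_eq_one (hk : 0 ≤ k) (ht : (t : ℝ) ≠ 0)
    (hconst : ∀ᶠ y in 𝓝[<] (t : ℝ), cantorStaircase y = cantorStaircase t) :
    metricSlope (tiltedStaircase k) t = 1 := by
  rw [metricSlope_tiltedStaircase_of_ne_zero hk ht]
  refine (limsup_congr ?_).trans (limsup_const 1)
  filter_upwards [hconst] with y hy
  rw [slope_eq_zero_iff.2 hy.symm, mul_zero, zero_add, ENNReal.ofReal_one]

lemma metricSlope_tiltedStaircase_eq_top (hk : 0 < k) (ht : (t : ℝ) ≠ 0)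
    (hconst : ¬ ∀ᶠ y in 𝓝[<] (t : ℝ), cantorStaircase y = cantorStaircase t) :
    metricSlope (tiltedStaircase k) t = ⊤ := by
  rw [metricSlope_tiltedStaircase_of_ne_zero hk.le ht, ← top_le_iff]
  calc ⊤ = ENNReal.ofReal k *
          limsup (fun y => ENNReal.ofReal (slope cantorStaircase t y)) (𝓝[<] (t : ℝ)) := by
        rw [limsup_slope_cantorStaircase_eq_top hconst, ENNReal.mul_top (by simpa)]
    _ = limsup (fun y => ENNReal.ofReal (k * slope cantorStaircase t y)) (𝓝[<] (t : ℝ)) := by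
        simp_rw [ENNReal.ofReal_mul hk.le]
        exact (ENNReal.limsup_const_mul_of_ne_top ENNReal.ofReal_ne_top).symm
    _ ≤ _ := limsup_le_limsup (.of_forall fun y => ENNReal.ofReal_le_ofReal (by linarith))

lemma metricSlope_tiltedStaircase_eq_ite (hk : 0 < k) (t : Set.Icc (0 : ℝ) 1) :
    metricSlope (tiltedStaircase k) t =
      if (t : ℝ) = 0 then 0
      else if ∀ᶠ y in 𝓝[<] (t : ℝ), cantorStaircase y = cantorStaircase t then 1 else ⊤ := by
  split_ifs with ht hconst
  · exact metricSlope_tiltedStaircase_of_eq_zero hk.le ht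
  · exact metricSlope_tiltedStaircase_eq_one hk.le ht hconst
  · exact metricSlope_tiltedStaircase_eq_top hk ht hconst

lemma metricSlope_tiltedStaircase_eq_zero_iff (hk : 0 < k) :
    metricSlope (tiltedStaircase k) t = 0 ↔ (t : ℝ) = 0 := by
  rw [metricSlope_tiltedStaircase_eq_ite hk]
  split_ifs with ht <;> simp [ht]

end TiltedStaircase

/-- Cantor-staircase counterexample: there are continuous functions `f, g` on `[0,1]` with
compact sublevel sets, the same slope everywhere (`∈ {1, +∞}` on `(0,1]`, `0` at `0`),
`Crit f = Crit g = {0}`, `f(0) = g(0) = 0`, which do not differ by a constant. -/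
theorem cantor_counterexample :
    ∃ f g : Set.Icc (0 : ℝ) 1 → ℝ,
      Continuous f ∧ Continuous g ∧
      (∀ α : ℝ, IsCompact {x : Set.Icc (0 : ℝ) 1 | f x ≤ α}) ∧
      (∀ α : ℝ, IsCompact {x : Set.Icc (0 : ℝ) 1 | g x ≤ α}) ∧
      (∀ t : Set.Icc (0 : ℝ) 1, metricSlope f t = metricSlope g t) ∧
      (∀ t : Set.Icc (0 : ℝ) 1, (t : ℝ) ≠ 0 →
        metricSlope f t = 1 ∨ metricSlope f t = ⊤) ∧
      (∀ t : Set.Icc (0 : ℝ) 1, (t : ℝ) = 0 → metricSlope f t = 0 ∧ metricSlope g t = 0) ∧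
      {x : Set.Icc (0 : ℝ) 1 | metricSlope f x = 0} = {x : Set.Icc (0 : ℝ) 1 | (x : ℝ) = 0} ∧
      {x : Set.Icc (0 : ℝ) 1 | metricSlope g x = 0} = {x : Set.Icc (0 : ℝ) 1 | (x : ℝ) = 0} ∧
      (∀ t : Set.Icc (0 : ℝ) 1, (t : ℝ) = 0 → f t = 0 ∧ g t = 0) ∧
      ¬∃ c : ℝ, ∀ t : Set.Icc (0 : ℝ) 1, f t = g t + c := by
  refine ⟨tiltedStaircase 1, tiltedStaircase 2, continuous_tiltedStaircase 1,
    continuous_tiltedStaircase 2, isCompact_tiltedStaircase_le 1, isCompact_tiltedStaircase_le 2,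
    fun t => ?slope_eq, fun t ht => ?slope_values, fun t ht => ?slope_zero,
    Set.ext fun t => metricSlope_tiltedStaircase_eq_zero_iff one_pos,
    Set.ext fun t => metricSlope_tiltedStaircase_eq_zero_iff two_pos,
    fun t ht => ⟨tiltedStaircase_of_eq_zero 1 ht, tiltedStaircase_of_eq_zero 2 ht⟩, ?not_const⟩
  case slope_eq =>
    rw [metricSlope_tiltedStaircase_eq_ite one_pos, metricSlope_tiltedStaircase_eq_ite two_pos]
  case slope_values =>
    rw [metricSlope_tiltedStaircase_eq_ite one_pos, if_neg ht]
    exact ite_eq_or_eq _ _ _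
  case slope_zero =>
    exact ⟨metricSlope_tiltedStaircase_of_eq_zero zero_le_one ht,
      metricSlope_tiltedStaircase_of_eq_zero zero_le_two ht⟩
  case not_const =>
    rintro ⟨c, hc⟩
    have at_zero := hc 0
    have at_one := hc 1
    rw [tiltedStaircase_of_eq_zero 1 rfl, tiltedStaircase_of_eq_zero 2 rfl] at at_zero
    rw [tiltedStaircase_one, tiltedStaircase_one] at at_one
    linarith
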